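/- arXiv:2011.00932 — 2 statements merged into one kernel-verified Lean document; each statement's English description precedes it below -/
import Mathlib

section
/- Let F be a field, τ : F → F a ring automorphism, k := F^τ its fixed field, and K a subfield of F with τ(K) = K and k ⊆ K. Let A ∈ GL_d(K), let U ∈ GL_d(F) satisfy τ(U) = A·U, let R be the K-subalgebra of F generated by the entries of U and (det U)⁻¹, and let L ⊆ F be the field of fractions of R inside F (i.e. the subfield of F generated by K and the entries of U). Then for f ∈ L the following are equivalent: (1) f ∈ R; (2) the K-linear span of {τⁿ(f) : n ≥ 0} in F is a finite-dimensional K-vector space. -/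
set_option synthInstance.maxHeartbeats 400000
set_option maxHeartbeats 1000000

/-!
The elements of `F` whose `τ`-iterates span a finite-dimensional `K`-space form a `K`-algebra. It
contains the generators of `R`, because `τ` maps the entries of `U` into their `K`-span and
`(det U)⁻¹` to a `K`-multiple of itself.

Conversely, let the iterates of `f ∈ L` span the finite-dimensional space `V`. The `r ∈ R` with
`r V ⊆ R` form an ideal of `R`, which is nonzero because `V` has a common denominator, and
`τ`-stable because `τ V = V` by a dimension count. Hence it suffices that `R` is `τ`-simple.

To see this, let `τ` act diagonally on `F ⊗[K] F`. The entries of `Z = (U⁻¹ ⊗ 1)(1 ⊗ U)` and the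
element `det U ⊗ (det U)⁻¹` are invariant and lie in `R ⊗ F`, and `1 ⊗ U = (U ⊗ 1) Z`, so that
`1 ⊗ R` lies in the `F`-span of the invariants of `R ⊗ F`. By descent, for a nonzero `τ`-stable
ideal `I` of `R`, the space `F ⊗ I` is spanned over `F` by such invariants. The multiplication
`F ⊗ F → F` does not annihilate `F ⊗ I`, hence not all of these invariants. As they lie in
`(R ⊗ F) ∩ (F ⊗ I) = R ⊗ I`, one of them yields a nonzero `τ`-fixed element of `I`, which is a
unit of `K` since `k ⊆ K`.
-/

open scoped TensorProduct

section Descent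

theorem linearCombination_mapRange_of_fixed {F M ι : Type*} [Semiring F] [AddCommMonoid M]
    [Module F M] {τ : F →+* F} {φ : M →ₛₗ[τ] M} {v : ι → M} (hv : ∀ i, φ (v i) = v i)
    (c : ι →₀ F) :
    Finsupp.linearCombination F v (c.mapRange τ (map_zero τ)) =
      φ (Finsupp.linearCombination F v c) := by
  induction c using Finsupp.induction_linear with
  | zero => simp
  | add c c' hc hc' => simp only [Finsupp.mapRange_add (map_add τ), map_add, hc, hc']
  | single i a => simp [hv]

theorem card_support_lt_of_apply_eq_zero {F ι : Type*} [Zero F] {c c' : ι →₀ F} {i : ι}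
    (hi : c i ≠ 0) (hi' : c' i = 0) (h : ∀ j, c j = 0 → c' j = 0) :
    c'.support.card < c.support.card := by
  refine Finset.card_lt_card ((Finset.ssubset_iff_of_subset fun j hj => ?_).2 ⟨i, ?_, ?_⟩)
  · exact Finsupp.mem_support_iff.2 fun hj0 => Finsupp.mem_support_iff.1 hj (h j hj0)
  · simpa using hi
  · simpa using hi'

variable {F M ι : Type*} [Field F] [AddCommGroup M] [Module F M] {τ : F →+* F}

theorem linearCombination_mem_span_fixedField {v : ι → M} {c : ι →₀ F} (hc : ∀ i, τ (c i) = c i) :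
    Finsupp.linearCombination F v c ∈
      Submodule.span (τ.eqLocusField (RingHom.id F)) (Set.range v) := by
  rw [Finsupp.linearCombination_apply]
  exact Submodule.sum_mem _ fun i _ =>
    Submodule.smul_mem _ (⟨c i, hc i⟩ : τ.eqLocusField (RingHom.id F))
      (Submodule.subset_span ⟨i, rfl⟩)

-- Since `c i = 1`, the coefficients `y = τ c - c` vanish at `i` and so have smaller support. If
-- `y ≠ 0`, then subtracting a multiple of `y` from `c` shrinks the support of `c`.
theorem linearCombination_mem_of_forall_card_support_lt {φ : M →ₛₗ[τ] M} {v : ι → M}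
    (hv : ∀ i, φ (v i) = v i) {N P : Submodule F M} (hN : ∀ x ∈ N, φ x ∈ N)
    (hP : ∀ x ∈ N, x ∈ Submodule.span (τ.eqLocusField (RingHom.id F)) (Set.range v) → x ∈ P)
    {c : ι →₀ F} {i : ι} (hi : c i = 1) (hc : Finsupp.linearCombination F v c ∈ N)
    (ih : ∀ c' : ι →₀ F, c'.support.card < c.support.card →
      Finsupp.linearCombination F v c' ∈ N → Finsupp.linearCombination F v c' ∈ P) :
    Finsupp.linearCombination F v c ∈ P := by
  set y : ι →₀ F := c.mapRange τ (map_zero τ) - c with hy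
  have hy_apply : ∀ j, y j = τ (c j) - c j := fun j => by simp [hy]
  have hy_zero : ∀ j, c j = 0 → y j = 0 := fun j hj => by simp [hy_apply, hj]
  have hyN : Finsupp.linearCombination F v y ∈ N := by
    rw [hy, map_sub, linearCombination_mapRange_of_fixed hv]
    exact N.sub_mem (hN _ hc) hc
  by_cases hy0 : y = 0
  · refine hP _ hc (linearCombination_mem_span_fixedField fun j => ?_)
    rw [← sub_eq_zero, ← hy_apply, hy0, Finsupp.zero_apply]
  obtain ⟨j, hj⟩ : ∃ j, y j ≠ 0 := Finsupp.ne_iff.1 hy0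
  set z : ι →₀ F := c - (c j / y j) • y with hz
  have hzN : Finsupp.linearCombination F v z ∈ N := by
    rw [hz, map_sub, map_smul]
    exact N.sub_mem hc (N.smul_mem _ hyN)
  have hyP : Finsupp.linearCombination F v y ∈ P :=
    ih y (card_support_lt_of_apply_eq_zero (i := i) (by simp [hi]) (by simp [hy_apply, hi])
      hy_zero) hyN
  have hzP : Finsupp.linearCombination F v z ∈ P :=
    ih z (card_support_lt_of_apply_eq_zero (mt (hy_zero j) hj) (by simp [hz, hj])
      fun l hl => by simp [hz, hl, hy_zero l hl]) hzN
  have hcyz : c = z + (c j / y j) • y := by rw [hz, sub_add_cancel]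
  rw [hcyz, map_add, map_smul]
  exact P.add_mem hzP (P.smul_mem _ hyP)

theorem linearCombination_mem_span_inter_fixed {φ : M →ₛₗ[τ] M} {v : ι → M}
    (hv : ∀ i, φ (v i) = v i) {N : Submodule F M} (hN : ∀ x ∈ N, φ x ∈ N) (c : ι →₀ F)
    (hc : Finsupp.linearCombination F v c ∈ N) :
    Finsupp.linearCombination F v c ∈ Submodule.span F
      (N ∩ Submodule.span (τ.eqLocusField (RingHom.id F)) (Set.range v) : Set M) := by
  induction hn : c.support.card using Nat.strong_induction_on generalizing c with
  | _ n ih =>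
  subst hn
  by_cases hc0 : c = 0
  · simp [hc0]
  obtain ⟨i, hi⟩ : ∃ i, c i ≠ 0 := Finsupp.ne_iff.1 hc0
  have hcard : ((c i)⁻¹ • c).support = c.support := Finsupp.support_smul_eq (inv_ne_zero hi)
  rw [← smul_inv_smul₀ hi c, map_smul]
  refine Submodule.smul_mem _ _ (linearCombination_mem_of_forall_card_support_lt hv hN
    (fun x hxN hx => Submodule.subset_span (Set.mem_inter hxN hx)) (i := i) (by simp [hi]) ?_ ?_)
  · rw [map_smul]
    exact N.smul_mem _ hc
  · rw [hcard]
    exact fun c' hc' hc'N => ih _ hc' c' hc'N rfl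

theorem le_span_inter_span_fixedField {φ : M →ₛₗ[τ] M} {s : Set M} (hs : ∀ x ∈ s, φ x = x)
    {N : Submodule F M} (hN : ∀ x ∈ N, φ x ∈ N) (hNs : N ≤ Submodule.span F s) :
    N ≤ Submodule.span F (N ∩ Submodule.span (τ.eqLocusField (RingHom.id F)) s : Set M) := by
  intro x hx
  obtain ⟨c, rfl⟩ := (Finsupp.mem_span_iff_linearCombination F s x).1 (hNs hx)
  simpa using linearCombination_mem_span_inter_fixed (v := ((↑) : s → M))
    (fun i => hs i i.2) hN c hx

end Descent

theorem submodule_map_eq_of_map_le {K V : Type*} [Field K] [AddCommGroup V] [Module K V]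
    {σ : K →+* K} [RingHomSurjective σ] {φ : V →ₛₗ[σ] V} (hφ : Function.Injective φ)
    {W : Submodule K V} [FiniteDimensional K W] (hW : W.map φ ≤ W) : W.map φ = W := by
  have : FiniteDimensional K (W.map φ) := Submodule.finiteDimensional_of_le hW
  have hrank : Module.rank K W ≤ Module.rank K (W.map φ) :=
    rank_le_of_surjective_injective σ (φ.submoduleMap W).toAddMonoidHom
      (RingHomSurjective.is_surjective) (fun x y hxy => Subtype.ext (hφ (congrArg Subtype.val hxy)))
      (map_smulₛₗ (φ.submoduleMap W))
  exact Submodule.eq_of_le_of_finrank_le hW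
    (Cardinal.toNat_le_toNat hrank (Module.rank_lt_aleph0 K _))

section TensorSquare

variable {K F : Type*} [CommRing K] [CommRing F] [Algebra K F] {σ : K →+* K} {τ : F →+* F}

/-- A ring endomorphism `τ` of a `K`-algebra `F` that extends the endomorphism `σ` of `K`, as a
`σ`-semilinear map. -/
def semilinearOfComp (hτ : τ.comp (algebraMap K F) = (algebraMap K F).comp σ) : F →ₛₗ[σ] F where
  toFun := τ
  map_add' := map_add τ
  map_smul' a x := by
    rw [Algebra.smul_def, Algebra.smul_def, map_mul]
    exact congrArg (· * τ x) (RingHom.congr_fun hτ a)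

@[simp]
theorem semilinearOfComp_apply (hτ : τ.comp (algebraMap K F) = (algebraMap K F).comp σ) (x : F) :
    semilinearOfComp hτ x = τ x :=
  rfl

/-- The diagonal endomorphism `τ ⊗ τ` of `F ⊗[K] F`, where `τ` extends an endomorphism of `K`. -/
noncomputable def tensorSquareMap (hτ : τ.comp (algebraMap K F) = (algebraMap K F).comp σ) :
    F ⊗[K] F →+* F ⊗[K] F where
  __ := TensorProduct.map (semilinearOfComp hτ) (semilinearOfComp hτ)
  map_one' := by simp [Algebra.TensorProduct.one_def]
  map_zero' := by simp
  map_mul' x y := by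
    change TensorProduct.map _ _ (x * y) = TensorProduct.map _ _ x * TensorProduct.map _ _ y
    induction x with
    | zero => simp
    | add x x' hx hx' => rw [add_mul, map_add, hx, hx', map_add, add_mul]
    | tmul a b =>
      induction y with
      | zero => simp
      | add y y' hy hy' => rw [mul_add, map_add, hy, hy', map_add, mul_add]
      | tmul c d => simp

@[simp]
theorem tensorSquareMap_tmul (hτ : τ.comp (algebraMap K F) = (algebraMap K F).comp σ) (a b : F) :
    tensorSquareMap hτ (a ⊗ₜ b) = τ a ⊗ₜ τ b :=
  rfl

theorem tensorSquareMap_smul (hτ : τ.comp (algebraMap K F) = (algebraMap K F).comp σ) (a : F)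
    (x : F ⊗[K] F) : tensorSquareMap hτ (a • x) = τ a • tensorSquareMap hτ x := by
  simp only [Algebra.smul_def, Algebra.TensorProduct.algebraMap_apply, map_mul,
    tensorSquareMap_tmul, Algebra.algebraMap_self, RingHom.id_apply, map_one]

theorem lmul_tensorSquareMap (hτ : τ.comp (algebraMap K F) = (algebraMap K F).comp σ)
    (x : F ⊗[K] F) :
    Algebra.TensorProduct.lmul' K (tensorSquareMap hτ x) =
      τ (Algebra.TensorProduct.lmul' K x) := by
  induction x with
  | zero => simp
  | add x y hx hy => simp only [map_add, hx, hy]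
  | tmul a b => simp

theorem tensorSquareMap_mem_baseChange (hτ : τ.comp (algebraMap K F) = (algebraMap K F).comp σ)
    {I : Submodule K F} (hI : ∀ x ∈ I, τ x ∈ I) {x : F ⊗[K] F} (hx : x ∈ I.baseChange F) :
    tensorSquareMap hτ x ∈ I.baseChange F := by
  rw [Submodule.baseChange_eq_span] at hx
  induction hx using Submodule.span_induction with
  | mem x hx =>
    obtain ⟨b, hb, rfl⟩ := hx
    simpa using Submodule.tmul_mem_baseChange_of_mem (1 : F) (hI b hb)
  | zero => simp
  | add x y _ _ hx hy => simpa only [map_add] using add_mem hx hy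
  | smul a x _ hx => simpa only [tensorSquareMap_smul] using Submodule.smul_mem _ _ hx

/-- The `τ ⊗ τ`-invariant elements of `F ⊗[K] F` that come from `R ⊗[K] F`. -/
noncomputable def tensorInvariants (hτ : τ.comp (algebraMap K F) = (algebraMap K F).comp σ)
    (R : Subalgebra K F) : Subring (F ⊗[K] F) :=
  (tensorSquareMap hτ).eqLocus (RingHom.id _) ⊓
    (Algebra.TensorProduct.map R.val (AlgHom.id K F)).range.toSubring

theorem tensorSquareMap_eq_of_mem_tensorInvariants
    {hτ : τ.comp (algebraMap K F) = (algebraMap K F).comp σ} {R : Subalgebra K F} {x : F ⊗[K] F}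
    (hx : x ∈ tensorInvariants hτ R) : tensorSquareMap hτ x = x :=
  hx.1

theorem tmul_mem_tensorInvariants {hτ : τ.comp (algebraMap K F) = (algebraMap K F).comp σ}
    {R : Subalgebra K F} {a b : F} (ha : a ∈ R) (hab : τ a ⊗ₜ[K] τ b = a ⊗ₜ[K] b) :
    a ⊗ₜ b ∈ tensorInvariants hτ R :=
  ⟨hab, (⟨a, ha⟩ : R) ⊗ₜ b, by simp⟩

/-- A `K`-subalgebra `R` of `F` is `τ`-simple if its only nonzero `τ`-stable ideal is `R` itself.
Ideals of `R` are encoded as `K`-subspaces of `F` that are contained in `R` and stable under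
multiplication by `R`. -/
def IsTauSimple (τ : F →+* F) (R : Subalgebra K F) : Prop :=
  ∀ I : Submodule K F, I ≤ R.toSubmodule → (∀ r ∈ R, ∀ x ∈ I, r * x ∈ I) → (∀ x ∈ I, τ x ∈ I) →
    I ≠ ⊥ → 1 ∈ I

end TensorSquare

section Simple

variable {K F : Type*} [Field K] [Field F] [Algebra K F] {σ : K →+* K} {τ : F →+* F}

-- A `K`-linear retraction of `A` onto `R` maps `A ⊗ I` into `R ⊗ I` and fixes `R ⊗ A`, so that the
-- intersection of `R ⊗ A` and `A ⊗ I` is `R ⊗ I`.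
theorem lmul_mem_of_mem_baseChange {A : Type*} [CommRing A] [Algebra K A] {R : Subalgebra K A}
    {I : Submodule K A} (hI : ∀ r ∈ R, ∀ x ∈ I, r * x ∈ I) {x : A ⊗[K] A}
    (hxR : x ∈ (Algebra.TensorProduct.map R.val (AlgHom.id K A)).range)
    (hxI : x ∈ I.baseChange A) : Algebra.TensorProduct.lmul' K x ∈ I := by
  obtain ⟨ρ, hρ⟩ := R.val.toLinearMap.exists_leftInverse_of_injective
    (LinearMap.ker_eq_bot.2 Subtype.val_injective)
  have hρR : ∀ r : R, ρ r = r := LinearMap.congr_fun hρ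
  let retract : A ⊗[K] A →ₗ[K] A :=
    LinearMap.mul' K A ∘ₗ LinearMap.rTensor A (R.val.toLinearMap ∘ₗ ρ)
  have h_eq : ∀ z, Algebra.TensorProduct.lmul' K
      (Algebra.TensorProduct.map R.val (AlgHom.id K A) z) =
        retract (Algebra.TensorProduct.map R.val (AlgHom.id K A) z) := fun z => by
    induction z with
    | zero => simp
    | add z w hz hw => simp only [map_add, hz, hw]
    | tmul r a => simp [retract, hρR]
  have h_mem : ∀ y, retract (I.subtype.baseChange A y) ∈ I := fun y => by
    induction y with
    | zero => simp
    | add y z hy hz => simpa only [map_add] using I.add_mem hy hz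
    | tmul a i => exact hI _ (ρ a).2 _ i.2
  obtain ⟨z, rfl⟩ := hxR
  obtain ⟨y, hy⟩ := hxI
  exact (h_eq z).symm ▸ hy ▸ h_mem y

theorem mem_tensorInvariants_of_mem_span_fixedField
    {hτ : τ.comp (algebraMap K F) = (algebraMap K F).comp σ}
    (hfix : ∀ a, τ a = a → a ∈ (algebraMap K F).range) {R : Subalgebra K F} {x : F ⊗[K] F}
    (hx : x ∈ Submodule.span (τ.eqLocusField (RingHom.id F))
      (tensorInvariants hτ R : Set (F ⊗[K] F))) :
    x ∈ tensorInvariants hτ R := by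
  induction hx using Submodule.span_induction with
  | mem _ hx => exact hx
  | zero => exact zero_mem _
  | add x y _ _ hx hy => exact add_mem hx hy
  | smul c x _ hx =>
    obtain ⟨a, ha⟩ := hfix c c.2
    have hcx : c • x = (a • (1 : F)) ⊗ₜ[K] 1 * x := by
      rw [Subfield.smul_def, ← ha, ← Algebra.algebraMap_eq_smul_one, Algebra.smul_def]
      rfl
    rw [hcx]
    refine mul_mem (tmul_mem_tensorInvariants (R.smul_mem R.one_mem a) ?_) hx
    rw [← Algebra.algebraMap_eq_smul_one, ha, show τ c = c from c.2, map_one]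

theorem isTauSimple_of_tmul_mem_span_tensorInvariants
    (hτ : τ.comp (algebraMap K F) = (algebraMap K F).comp σ)
    (hfix : ∀ a, τ a = a → a ∈ (algebraMap K F).range) {R : Subalgebra K F}
    (hR : ∀ r ∈ R, (1 : F) ⊗ₜ[K] r ∈
      Submodule.span F (tensorInvariants hτ R : Set (F ⊗[K] F))) :
    IsTauSimple τ R := by
  intro I hIR hI hIτ hI0
  obtain ⟨r, hrI, hr0⟩ := I.exists_mem_ne_zero_of_ne_bot hI0
  let φ : F ⊗[K] F →ₛₗ[τ] F ⊗[K] F :=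
    { tensorSquareMap hτ with map_smul' := tensorSquareMap_smul hτ }
  have hN_span : I.baseChange F ≤ Submodule.span F (tensorInvariants hτ R : Set (F ⊗[K] F)) := by
    rw [Submodule.baseChange_eq_span, Submodule.span_le]
    rintro _ ⟨x, hx, rfl⟩
    exact hR x (hIR hx)
  have hN_descent := le_span_inter_span_fixedField (φ := φ)
    (fun x hx => tensorSquareMap_eq_of_mem_tensorInvariants hx)
    (fun x hx => tensorSquareMap_mem_baseChange hτ hIτ hx) hN_span
  obtain ⟨x, ⟨hxI, hx⟩, hx0⟩ : ∃ x ∈ (I.baseChange F ∩ Submodule.span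
      (τ.eqLocusField (RingHom.id F)) (tensorInvariants hτ R : Set (F ⊗[K] F)) : Set (F ⊗[K] F)),
      Algebra.TensorProduct.lmul'' K x ≠ 0 := by
    by_contra! h
    have hker : I.baseChange F ≤ LinearMap.ker (Algebra.TensorProduct.lmul'' K).toLinearMap :=
      hN_descent.trans (Submodule.span_le.2 h)
    have hr : 1 * r = 0 := hker (Submodule.tmul_mem_baseChange_of_mem 1 hrI)
    exact hr0 (by rwa [one_mul] at hr)
  have hx_inv := mem_tensorInvariants_of_mem_span_fixedField hfix hx
  have hxI : Algebra.TensorProduct.lmul' K x ∈ I := lmul_mem_of_mem_baseChange hI hx_inv.2 hxI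
  obtain ⟨a, ha⟩ : Algebra.TensorProduct.lmul' K x ∈ (algebraMap K F).range :=
    hfix _ (by rw [← lmul_tensorSquareMap hτ, hx_inv.1, RingHom.id_apply])
  have ha0 : a ≠ 0 := by
    rintro rfl
    exact hx0 (ha.symm.trans (map_zero _))
  rw [← ha, Algebra.algebraMap_eq_smul_one] at hxI
  exact (I.smul_mem_iff ha0).1 hxI

end Simple

section AdjoinMatrix

variable {k B : Type*} [CommRing k] [CommRing B] [Algebra k B]

theorem map_mem_of_mem_adjoin {σ : k →+* k} {τ : B →+* B}
    (hτ : τ.comp (algebraMap k B) = (algebraMap k B).comp σ) {s : Set B}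
    {R : Subalgebra k B} (hs : ∀ x ∈ s, τ x ∈ R) {x : B} (hx : x ∈ Algebra.adjoin k s) :
    τ x ∈ R := by
  induction hx using Algebra.adjoin_induction with
  | mem x hx => exact hs x hx
  | algebraMap a => exact RingHom.congr_fun hτ a ▸ R.algebraMap_mem (σ a)
  | add x y _ _ hx hy => exact map_add τ x y ▸ R.add_mem hx hy
  | mul x y _ _ hx hy => exact map_mul τ x y ▸ R.mul_mem hx hy

theorem toSubmodule_adjoin_subring (S : Subring B) :
    (Algebra.adjoin k (S : Set B)).toSubmodule = Submodule.span k (S : Set B) := by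
  rw [Algebra.adjoin_eq_span]
  exact congrArg (fun T : Submonoid B => Submodule.span k (T : Set B))
    (Submonoid.closure_eq S.toSubmonoid)

theorem sum_tmul_map_mul {l m p q : Type*} [Fintype m] [Fintype p]
    (X : Matrix l m B) (C : Matrix m p k) (Y : Matrix p q B) (i : l) (j : q) :
    ∑ a, X i a ⊗ₜ[k] (C.map (algebraMap k B) * Y) a j =
      ∑ b, (X * C.map (algebraMap k B)) i b ⊗ₜ[k] Y b j := by
  simp only [Matrix.mul_apply, Matrix.map_apply, TensorProduct.tmul_sum, TensorProduct.sum_tmul]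
  rw [Finset.sum_comm]
  refine Finset.sum_congr rfl fun b _ => Finset.sum_congr rfl fun a _ => ?_
  rw [← Algebra.smul_def, ← Algebra.commutes, ← Algebra.smul_def, TensorProduct.tmul_smul,
    TensorProduct.smul_tmul']

theorem det_mem_of_forall_mem {n : Type*} [Fintype n] [DecidableEq n]
    {R : Subalgebra k B} {M : Matrix n n B} (hM : ∀ i j, M i j ∈ R) : M.det ∈ R := by
  rw [Matrix.det_apply]
  exact R.sum_mem fun π _ => R.zsmul_mem (R.prod_mem fun i _ => hM _ _) _

end AdjoinMatrix

section PicardVessiot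

variable {K F n : Type*} [Field K] [Field F] [Algebra K F] [Fintype n]
  {σ : K →+* K} {τ : F →+* F} {A : Matrix n n K} {U : Matrix n n F}

theorem map_entry_eq_sum (hU : U.map τ = A.map (algebraMap K F) * U) (i j : n) :
    τ (U i j) = ∑ l, A i l • U l j := by
  simpa [Matrix.mul_apply, Algebra.smul_def] using congrFun₂ hU i j

variable [DecidableEq n]

/-- The Picard-Vessiot ring `K[U, (det U)⁻¹]` inside `F` of a system `τ Y = A Y` with fundamental
matrix `U`. The inverse of the determinant is the junk value `0` unless `U` is invertible. -/
def picardVessiotRing (K : Type*) [Field K] [Algebra K F] (U : Matrix n n F) : Subalgebra K F :=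
  Algebra.adjoin K ((Set.range fun p : n × n => U p.1 p.2) ∪ {U.det⁻¹})

theorem entry_mem_picardVessiotRing (i j : n) : U i j ∈ picardVessiotRing K U :=
  Algebra.subset_adjoin (Or.inl ⟨(i, j), rfl⟩)

theorem inv_det_mem_picardVessiotRing : U.det⁻¹ ∈ picardVessiotRing K U :=
  Algebra.subset_adjoin (Or.inr rfl)

theorem inv_entry_mem_picardVessiotRing (i j : n) : U⁻¹ i j ∈ picardVessiotRing K U := by
  rw [Matrix.inv_def, Ring.inverse_eq_inv', Matrix.smul_apply, Matrix.adjugate_apply]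
  refine mul_mem inv_det_mem_picardVessiotRing (det_mem_of_forall_mem fun l m => ?_)
  rw [Matrix.updateRow_apply, Pi.single_apply]
  split_ifs
  · exact one_mem _
  · exact zero_mem _
  · exact entry_mem_picardVessiotRing l m

theorem map_det_eq_smul (hU : U.map τ = A.map (algebraMap K F) * U) :
    τ U.det = A.det • U.det := by
  rw [τ.map_det, RingHom.mapMatrix_apply, hU, Matrix.det_mul, Algebra.smul_def,
    (algebraMap K F).map_det, RingHom.mapMatrix_apply]

theorem map_inv_det_eq_smul (hU : U.map τ = A.map (algebraMap K F) * U) :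
    τ U.det⁻¹ = A.det⁻¹ • U.det⁻¹ := by
  rw [map_inv₀, map_det_eq_smul hU, Algebra.smul_def, Algebra.smul_def, mul_inv, map_inv₀]

theorem map_mem_picardVessiotRing (hτ : τ.comp (algebraMap K F) = (algebraMap K F).comp σ)
    (hU : U.map τ = A.map (algebraMap K F) * U) {x : F} (hx : x ∈ picardVessiotRing K U) :
    τ x ∈ picardVessiotRing K U := by
  refine map_mem_of_mem_adjoin hτ ?_ hx
  rintro _ (⟨p, rfl⟩ | rfl)
  · rw [map_entry_eq_sum hU]
    exact sum_mem fun l _ => Subalgebra.smul_mem _ (entry_mem_picardVessiotRing l p.2) _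
  · rw [map_inv_det_eq_smul hU]
    exact Subalgebra.smul_mem _ inv_det_mem_picardVessiotRing _

theorem inv_map_mul_map_eq_inv (hUdet : U.det ≠ 0) (hU : U.map τ = A.map (algebraMap K F) * U) :
    U⁻¹.map τ * A.map (algebraMap K F) = U⁻¹ := by
  refine (Matrix.inv_eq_left_inv ?_).symm
  rw [Matrix.mul_assoc, ← hU, ← Matrix.map_mul, Matrix.nonsing_inv_mul _ hUdet.isUnit,
    Matrix.map_one τ (map_zero τ) (map_one τ)]

theorem sum_inv_tmul_mem_tensorInvariants
    (hτ : τ.comp (algebraMap K F) = (algebraMap K F).comp σ) (hUdet : U.det ≠ 0)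
    (hU : U.map τ = A.map (algebraMap K F) * U) (i j : n) :
    ∑ l, U⁻¹ i l ⊗ₜ[K] U l j ∈ tensorInvariants hτ (picardVessiotRing K U) := by
  refine ⟨?_, ∑ l, (⟨U⁻¹ i l, inv_entry_mem_picardVessiotRing i l⟩ : picardVessiotRing K U) ⊗ₜ
    U l j, by simp⟩
  calc tensorSquareMap hτ (∑ l, U⁻¹ i l ⊗ₜ[K] U l j)
      = ∑ l, U⁻¹.map τ i l ⊗ₜ[K] U.map τ l j := by simp
    _ = ∑ l, (U⁻¹.map τ * A.map (algebraMap K F)) i l ⊗ₜ[K] U l j := by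
        rw [hU, sum_tmul_map_mul]
    _ = ∑ l, U⁻¹ i l ⊗ₜ[K] U l j := by rw [inv_map_mul_map_eq_inv hUdet hU]

theorem det_tmul_inv_det_mem_tensorInvariants
    (hτ : τ.comp (algebraMap K F) = (algebraMap K F).comp σ) (hUdet : U.det ≠ 0)
    (hU : U.map τ = A.map (algebraMap K F) * U) :
    U.det ⊗ₜ[K] U.det⁻¹ ∈ tensorInvariants hτ (picardVessiotRing K U) := by
  have hAdet : A.det ≠ 0 := fun h =>
    (map_ne_zero τ).2 hUdet (by rw [map_det_eq_smul hU, h, zero_smul])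
  refine tmul_mem_tensorInvariants (det_mem_of_forall_mem entry_mem_picardVessiotRing) ?_
  rw [map_det_eq_smul hU, map_inv_det_eq_smul hU, TensorProduct.smul_tmul, smul_inv_smul₀ hAdet]

theorem one_tmul_entry_eq_sum (hUdet : U.det ≠ 0) (i j : n) :
    (1 : F) ⊗ₜ[K] U i j = ∑ m, U i m • ∑ l, U⁻¹ m l ⊗ₜ[K] U l j := by
  simp only [Finset.smul_sum, TensorProduct.smul_tmul', smul_eq_mul]
  rw [Finset.sum_comm]
  simp only [← TensorProduct.sum_tmul, ← Matrix.mul_apply,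
    Matrix.mul_nonsing_inv _ hUdet.isUnit, Matrix.one_apply]
  simp [TensorProduct.ite_tmul]

theorem one_tmul_mem_span_tensorInvariants
    (hτ : τ.comp (algebraMap K F) = (algebraMap K F).comp σ) (hUdet : U.det ≠ 0)
    (hU : U.map τ = A.map (algebraMap K F) * U) {r : F} (hr : r ∈ picardVessiotRing K U) :
    (1 : F) ⊗ₜ[K] r ∈ Submodule.span F
      (tensorInvariants hτ (picardVessiotRing K U) : Set (F ⊗[K] F)) := by
  rw [← toSubmodule_adjoin_subring]
  set S := Algebra.adjoin F (tensorInvariants hτ (picardVessiotRing K U) : Set (F ⊗[K] F))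
  suffices h : picardVessiotRing K U ≤
      (S.restrictScalars K).comap Algebra.TensorProduct.includeRight from h hr
  refine Algebra.adjoin_le ?_
  rintro _ (⟨p, rfl⟩ | rfl)
  · change (1 : F) ⊗ₜ[K] U p.1 p.2 ∈ S
    rw [one_tmul_entry_eq_sum hUdet]
    exact sum_mem fun m _ => S.smul_mem
      (Algebra.subset_adjoin (sum_inv_tmul_mem_tensorInvariants hτ hUdet hU m p.2)) _
  · change (1 : F) ⊗ₜ[K] U.det⁻¹ ∈ S
    have h : (1 : F) ⊗ₜ[K] U.det⁻¹ = U.det⁻¹ • (U.det ⊗ₜ[K] U.det⁻¹) := by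
      rw [TensorProduct.smul_tmul', smul_eq_mul, inv_mul_cancel₀ hUdet]
    rw [h]
    exact S.smul_mem
      (Algebra.subset_adjoin (det_tmul_inv_det_mem_tensorInvariants hτ hUdet hU)) _

theorem isTauSimple_picardVessiotRing (hτ : τ.comp (algebraMap K F) = (algebraMap K F).comp σ)
    (hfix : ∀ a, τ a = a → a ∈ (algebraMap K F).range) (hUdet : U.det ≠ 0)
    (hU : U.map τ = A.map (algebraMap K F) * U) : IsTauSimple τ (picardVessiotRing K U) :=
  isTauSimple_of_tmul_mem_span_tensorInvariants hτ hfix fun _ =>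
    one_tmul_mem_span_tensorInvariants hτ hUdet hU

end PicardVessiot

section FiniteOrbit

variable {K F : Type*} [Field K] [CommRing F] [Algebra K F] {σ : K →+* K} {τ : F →+* F}

/-- The `K`-linear span of the forward orbit `f, τ f, τ² f, …`. -/
def orbitSpan (K : Type*) [Field K] [Algebra K F] (τ : F → F) (f : F) : Submodule K F :=
  Submodule.span K (Set.range fun i : ℕ => τ^[i] f)

theorem iterate_mem_orbitSpan (τ : F → F) (f : F) (i : ℕ) : τ^[i] f ∈ orbitSpan K τ f :=
  Submodule.subset_span ⟨i, rfl⟩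

theorem orbitSpan_le {τ : F → F} {f : F} {W : Submodule K F} :
    orbitSpan K τ f ≤ W ↔ ∀ i : ℕ, τ^[i] f ∈ W :=
  Submodule.span_le.trans Set.range_subset_iff

theorem map_mem_span_of_forall_mem (hτ : τ.comp (algebraMap K F) = (algebraMap K F).comp σ)
    {s : Set F} (hs : ∀ x ∈ s, τ x ∈ Submodule.span K s) {x : F} (hx : x ∈ Submodule.span K s) :
    τ x ∈ Submodule.span K s :=
  (Submodule.span_le (p := (Submodule.span K s).comap (semilinearOfComp hτ))).2 hs hx

theorem finiteDimensional_orbitSpan_of_mem_span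
    (hτ : τ.comp (algebraMap K F) = (algebraMap K F).comp σ) {s : Set F} (hs_fin : s.Finite)
    (hs : ∀ x ∈ s, τ x ∈ Submodule.span K s) {f : F} (hf : f ∈ Submodule.span K s) :
    FiniteDimensional K (orbitSpan K τ f) :=
  have := FiniteDimensional.span_of_finite K hs_fin
  Submodule.finiteDimensional_of_le (orbitSpan_le.2 fun i =>
    Set.MapsTo.iterate (fun _ => map_mem_span_of_forall_mem hτ hs) i hf)

/-- The `K`-algebra of the elements of `F` whose `τ`-iterates span a finite-dimensional space. -/
def finiteOrbitSubalgebra (hτ : τ.comp (algebraMap K F) = (algebraMap K F).comp σ) :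
    Subalgebra K F where
  carrier := {f | FiniteDimensional K (orbitSpan K τ f)}
  add_mem' {f g} (_ : FiniteDimensional K _) (_ : FiniteDimensional K _) :=
    Submodule.finiteDimensional_of_le (S₂ := orbitSpan K τ f ⊔ orbitSpan K τ g)
      (orbitSpan_le.2 fun i => iterate_map_add τ i f g ▸
        Submodule.add_mem_sup (iterate_mem_orbitSpan τ f i) (iterate_mem_orbitSpan τ g i))
  mul_mem' {f g} hf hg :=
    have : FiniteDimensional K ↥(orbitSpan K τ f * orbitSpan K τ g) :=
      Module.Finite.iff_fg.2 ((Module.Finite.iff_fg.1 hf).mul (Module.Finite.iff_fg.1 hg))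
    Submodule.finiteDimensional_of_le (orbitSpan_le.2 fun i => iterate_map_mul τ i f g ▸
      Submodule.mul_mem_mul (iterate_mem_orbitSpan τ f i) (iterate_mem_orbitSpan τ g i))
  algebraMap_mem' a :=
    finiteDimensional_orbitSpan_of_mem_span hτ (Set.finite_singleton 1)
      (by simp [Submodule.mem_span_singleton_self])
      (Submodule.mem_span_singleton.2 ⟨a, (Algebra.algebraMap_eq_smul_one a).symm⟩)

theorem mem_finiteOrbitSubalgebra {hτ : τ.comp (algebraMap K F) = (algebraMap K F).comp σ}
    {f : F} : f ∈ finiteOrbitSubalgebra hτ ↔ FiniteDimensional K (orbitSpan K τ f) :=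
  Iff.rfl

end FiniteOrbit

section Denominators

variable {K F : Type*} [CommRing K] [CommRing F] [Algebra K F] {R : Subalgebra K F}

theorem exists_mul_iterate_mem {τ : F →+* F} (hτ : Function.Injective τ) (hRτ : ∀ x ∈ R, τ x ∈ R)
    {f : F} (hf : ∃ r ∈ R, r ≠ 0 ∧ r * f ∈ R) (i : ℕ) : ∃ r ∈ R, r ≠ 0 ∧ r * τ^[i] f ∈ R := by
  induction i with
  | zero => exact hf
  | succ i ih =>
    obtain ⟨r, hr, hr0, hrf⟩ := ih
    refine ⟨τ r, hRτ r hr, (map_ne_zero_iff τ hτ).2 hr0, ?_⟩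
    rw [Function.iterate_succ_apply', ← map_mul]
    exact hRτ _ hrf

variable [IsDomain F]

theorem exists_mul_mem_of_mem_span {s : Set F} (hs : ∀ x ∈ s, ∃ r ∈ R, r ≠ 0 ∧ r * x ∈ R) {x : F}
    (hx : x ∈ Submodule.span K s) : ∃ r ∈ R, r ≠ 0 ∧ r * x ∈ R := by
  induction hx using Submodule.span_induction with
  | mem x hx => exact hs x hx
  | zero => exact ⟨1, R.one_mem, one_ne_zero, by simp [R.zero_mem]⟩
  | add x y _ _ hx hy =>
    obtain ⟨r, hr, hr0, hrx⟩ := hx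
    obtain ⟨t, ht, ht0, hty⟩ := hy
    refine ⟨r * t, R.mul_mem hr ht, mul_ne_zero hr0 ht0, ?_⟩
    have h_eq : r * t * (x + y) = t * (r * x) + r * (t * y) := by ring
    exact h_eq ▸ R.add_mem (R.mul_mem ht hrx) (R.mul_mem hr hty)
  | smul a x _ hx =>
    obtain ⟨r, hr, hr0, hrx⟩ := hx
    exact ⟨r, hr, hr0, mul_smul_comm a r x ▸ R.smul_mem hrx a⟩

theorem exists_forall_mul_mem_of_fg {V : Submodule K F} (hV : V.FG)
    (h : ∀ x ∈ V, ∃ r ∈ R, r ≠ 0 ∧ r * x ∈ R) : ∃ r ∈ R, r ≠ 0 ∧ ∀ x ∈ V, r * x ∈ R := by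
  induction V, hV using Submodule.fg_induction with
  | singleton x =>
    obtain ⟨r, hr, hr0, hrx⟩ := h x (Submodule.mem_span_singleton_self x)
    refine ⟨r, hr, hr0, fun y hy => ?_⟩
    obtain ⟨a, rfl⟩ := Submodule.mem_span_singleton.1 hy
    exact mul_smul_comm a r x ▸ R.smul_mem hrx a
  | sup V W _ _ hV hW =>
    obtain ⟨r, hr, hr0, hrV⟩ := hV fun x hx => h x (Submodule.mem_sup_left hx)
    obtain ⟨t, ht, ht0, htW⟩ := hW fun x hx => h x (Submodule.mem_sup_right hx)
    refine ⟨r * t, R.mul_mem hr ht, mul_ne_zero hr0 ht0, fun x hx => ?_⟩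
    obtain ⟨v, hv, w, hw, rfl⟩ := Submodule.mem_sup.1 hx
    have h_eq : r * t * (v + w) = t * (r * v) + r * (t * w) := by ring
    exact h_eq ▸ R.add_mem (R.mul_mem ht (hrV v hv)) (R.mul_mem hr (htW w hw))

theorem le_of_isTauSimple {σ : K →+* K} [RingHomSurjective σ] {τ : F →+* F}
    (hτ : τ.comp (algebraMap K F) = (algebraMap K F).comp σ)
    (hRτ : ∀ x ∈ R, τ x ∈ R) (hR : IsTauSimple τ R) {V : Submodule K F} (hV : V.FG)
    (hVτ : V.map (semilinearOfComp hτ) = V) (hVR : ∀ x ∈ V, ∃ r ∈ R, r ≠ 0 ∧ r * x ∈ R) :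
    V ≤ R.toSubmodule := by
  obtain ⟨r, hr, hr0, hrV⟩ := exists_forall_mul_mem_of_fg hV hVR
  let I : Submodule K F := R.toSubmodule ⊓ R.toSubmodule / V
  have hI : ∀ x, x ∈ I ↔ x ∈ R ∧ ∀ v ∈ V, x * v ∈ R := fun x => Iff.rfl
  have hI_mul : ∀ s ∈ R, ∀ x ∈ I, s * x ∈ I := fun s hs x hx =>
    (hI _).2 ⟨R.mul_mem hs hx.1, fun v hv => mul_assoc s x v ▸ R.mul_mem hs (hx.2 v hv)⟩
  have hIτ : ∀ x ∈ I, τ x ∈ I := by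
    refine fun x hx => (hI _).2 ⟨hRτ x hx.1, fun v hv => ?_⟩
    obtain ⟨w, hw, rfl⟩ := hVτ.ge hv
    exact map_mul τ x w ▸ hRτ _ (hx.2 w hw)
  have hI_ne : I ≠ ⊥ := (Submodule.ne_bot_iff I).2 ⟨r, ⟨hr, hrV⟩, hr0⟩
  have hI_one : 1 ∈ I := hR I inf_le_left hI_mul hIτ hI_ne
  exact fun v hv => one_mul v ▸ hI_one.2 v hv

end Denominators

section Criterion

variable {K F n : Type*} [Field K] [Field F] [Algebra K F] {σ : K →+* K} {τ : F →+* F}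

theorem map_orbitSpan_eq [RingHomSurjective σ]
    (hτ : τ.comp (algebraMap K F) = (algebraMap K F).comp σ) {f : F}
    [FiniteDimensional K (orbitSpan K τ f)] :
    (orbitSpan K τ f).map (semilinearOfComp hτ) = orbitSpan K τ f := by
  refine submodule_map_eq_of_map_le τ.injective ((Submodule.map_span_le _ _ _).2 ?_)
  rintro _ ⟨i, rfl⟩
  rw [semilinearOfComp_apply, ← Function.iterate_succ_apply' τ i f]
  exact iterate_mem_orbitSpan τ f (i + 1)

theorem picardVessiotRing_le_finiteOrbitSubalgebra [Fintype n] [DecidableEq n] {A : Matrix n n K}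
    {U : Matrix n n F} (hτ : τ.comp (algebraMap K F) = (algebraMap K F).comp σ)
    (hU : U.map τ = A.map (algebraMap K F) * U) :
    picardVessiotRing K U ≤ finiteOrbitSubalgebra hτ := by
  refine Algebra.adjoin_le (Set.union_subset ?_ (Set.singleton_subset_iff.2 ?_))
  · refine fun f hf => mem_finiteOrbitSubalgebra.2
      (finiteDimensional_orbitSpan_of_mem_span hτ (Set.finite_range _) ?_
        (Submodule.subset_span hf))
    rintro _ ⟨p, rfl⟩
    rw [map_entry_eq_sum hU]
    exact Submodule.sum_mem _ fun l _ =>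
      Submodule.smul_mem _ _ (Submodule.subset_span ⟨(l, p.2), rfl⟩)
  · refine mem_finiteOrbitSubalgebra.2 (finiteDimensional_orbitSpan_of_mem_span hτ
      (Set.finite_singleton _) ?_ (Submodule.mem_span_singleton_self _))
    rintro _ rfl
    exact Submodule.mem_span_singleton.2 ⟨_, (map_inv_det_eq_smul hU).symm⟩

theorem exists_mul_mem_picardVessiotRing [Fintype n] [DecidableEq n] {U : Matrix n n F} {f : F}
    (hf : f ∈ IntermediateField.adjoin K (Set.range fun p : n × n => U p.1 p.2)) :
    ∃ r ∈ picardVessiotRing K U, r ≠ 0 ∧ r * f ∈ picardVessiotRing K U := by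
  have hle : Algebra.adjoin K (Set.range fun p : n × n => U p.1 p.2) ≤ picardVessiotRing K U :=
    Algebra.adjoin_mono Set.subset_union_left
  obtain ⟨y, hy, z, hz, rfl⟩ := IntermediateField.mem_adjoin_iff_div.1 hf
  rcases eq_or_ne z 0 with rfl | hz0
  · exact ⟨1, one_mem _, one_ne_zero, by simp⟩
  · exact ⟨z, hle hz, hz0, (mul_div_cancel₀ y hz0).symm ▸ hle hy⟩

theorem mem_picardVessiotRing_iff_finiteDimensional_orbitSpan [Fintype n] [DecidableEq n]
    [RingHomSurjective σ] (hτ : τ.comp (algebraMap K F) = (algebraMap K F).comp σ)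
    (hfix : ∀ a, τ a = a → a ∈ (algebraMap K F).range) {A : Matrix n n K} {U : Matrix n n F}
    (hUdet : U.det ≠ 0) (hU : U.map τ = A.map (algebraMap K F) * U) {f : F}
    (hf : f ∈ IntermediateField.adjoin K (Set.range fun p : n × n => U p.1 p.2)) :
    f ∈ picardVessiotRing K U ↔ FiniteDimensional K (orbitSpan K τ f) := by
  refine ⟨fun hfR => mem_finiteOrbitSubalgebra.1
    (picardVessiotRing_le_finiteOrbitSubalgebra hτ hU hfR), fun hV => ?_⟩
  have hRτ : ∀ x ∈ picardVessiotRing K U, τ x ∈ picardVessiotRing K U :=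
    fun _ => map_mem_picardVessiotRing hτ hU
  have h_den : ∀ x ∈ orbitSpan K τ f,
      ∃ r ∈ picardVessiotRing K U, r ≠ 0 ∧ r * x ∈ picardVessiotRing K U := fun x hx =>
    exists_mul_mem_of_mem_span (Set.forall_mem_range.2
      (exists_mul_iterate_mem τ.injective hRτ (exists_mul_mem_picardVessiotRing hf))) hx
  exact le_of_isTauSimple hτ hRτ (isTauSimple_picardVessiotRing hτ hfix hUdet hU)
    (Module.Finite.iff_fg.1 hV) (map_orbitSpan_eq hτ) h_den (iterate_mem_orbitSpan τ f 0)

end Criterion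

theorem mem_picardVessiot_ring_iff_finite_span_general {F n : Type*} [Field F] [Fintype n]
    [DecidableEq n] {τ : F →+* F} {K : Subfield F} (hτK : K.map τ = K)
    (hfix : ∀ a, τ a = a → a ∈ K) {A U : Matrix n n F} (hA : ∀ i j, A i j ∈ K)
    (hUdet : U.det ≠ 0) (hU : U.map τ = A * U) {f : F}
    (hf : f ∈ Subfield.closure ((K : Set F) ∪ Set.range fun p : n × n => U p.1 p.2)) :
    f ∈ Algebra.adjoin K ((Set.range fun p : n × n => U p.1 p.2) ∪ {U.det⁻¹}) ↔
      FiniteDimensional K (Submodule.span K (Set.range fun i : ℕ => τ^[i] f)) := by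
  let σ : K →+* K := τ.restrict K K fun a ha => hτK.le ⟨a, ha, rfl⟩
  have hσ : RingHomSurjective σ := ⟨fun a =>
    let ⟨b, hb, hba⟩ := hτK.ge a.2
    ⟨⟨b, hb⟩, Subtype.ext hba⟩⟩
  have hτ : τ.comp (algebraMap K F) = (algebraMap K F).comp σ := rfl
  refine mem_picardVessiotRing_iff_finiteDimensional_orbitSpan hτ
    (fun a ha => ⟨⟨a, hfix a ha⟩, rfl⟩) (A := Matrix.of fun i j => ⟨A i j, hA i j⟩) hUdet hU ?_
  rwa [← IntermediateField.mem_toSubfield, IntermediateField.adjoin_toSubfield,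
    show Set.range (algebraMap K F) = K from Subtype.range_coe]

/-- An element `f` of the Picard-Vessiot field `L = K(U)` belongs to the Picard-Vessiot ring
`R = K[U, (det U)⁻¹]` if and only if the `K`-span of its `τ`-iterates is finite-dimensional. -/
theorem mem_picardVessiot_ring_iff_finite_span
    (F : Type*) [Field F] (τ : F ≃+* F)
    (k : Subfield F) (hk : ∀ a : F, a ∈ k ↔ τ a = a)
    (K : Subfield F) (hkK : (k : Set F) ⊆ (K : Set F)) (hτK : ∀ a : F, a ∈ K ↔ τ a ∈ K)
    (d : ℕ) (A U : Matrix (Fin d) (Fin d) F)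
    (hA : ∀ i j, A i j ∈ K) (hAdet : A.det ≠ 0) (hUdet : U.det ≠ 0)
    (hU : U.map τ = A * U)
    (R : Subalgebra K F)
    (hR : R = Algebra.adjoin K
      ((Set.range fun p : Fin d × Fin d => U p.1 p.2) ∪ {(U.det)⁻¹}))
    (L : Subfield F)
    (hL : L = Subfield.closure ((K : Set F) ∪ Set.range fun p : Fin d × Fin d => U p.1 p.2))
    (f : F) (hf : f ∈ L) :
    f ∈ R ↔
      FiniteDimensional K (Submodule.span K (Set.range fun n : ℕ => (⇑τ)^[n] f)) := by
  subst hR hL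
  have hmap : K.map (τ : F →+* F) = K := by
    refine le_antisymm (Subfield.map_le_iff_le_comap.2 fun a ha => (hτK a).1 ha) fun a ha => ?_
    exact Subfield.mem_map.2 ⟨τ.symm a, (hτK _).2 (by simpa), by simp⟩
  exact mem_picardVessiot_ring_iff_finite_span_general hmap (fun a ha => hkK ((hk a).2 ha)) hA
    hUdet hU hf
end

section
/- Let k be a field of characteristic zero and C ⊆ k an algebraically closed subfield, and let q ∈ C be nonzero and not a root of unity. Consider the field k(X) of rational functions over k with the derivation ∂ = X·d/dX, and let τ : k(X) → k(X) be the k-algebra automorphism determined by X ↦ qX. Let f ∈ C(X) be a rational function with coefficients in C, viewed inside k(X). If there exist n ≥ 0, λ₀, …, λₙ ∈ k, not all zero, and g ∈ k(X) such that λ₀f + λ₁∂(f) + ⋯ + λₙ∂ⁿ(f) = τ(g) − g, then there exist μ₀, …, μₙ ∈ C, not all zero, and h ∈ C(X) such that μ₀f + μ₁∂(f) + ⋯ + μₙ∂ⁿ(f) = h(qX) − h(X). -/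
set_option synthInstance.maxHeartbeats 400000
set_option maxHeartbeats 1000000

/-!
The coefficients `λᵢ`, one inverse `λⱼ⁻¹` and the coefficients of `g` generate a finitely generated
`C`-subalgebra `A` of `k`. By the Nullstellensatz there is a `C`-algebra map `φ : A → C`, and
applying `φ` to the coefficients of polynomials specializes the equation to one over `C`. The
numbers `φ(λᵢ)` do not all vanish because `λⱼ` is a unit of `A`; the denominator of `g` survives
because it is monic; and elements of `C(X)`, hence `f`, its derivatives and `τ X`, are unchanged.
-/

section SpecializationGraph

variable {R K L : Type*} [CommRing R] [Field K] [Field L]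

/-- The graph of the partially defined map `K ⇢ L` sending `α p / α s` to `β p / β s`: the pairs of
fractions with common numerator and denominator in `R`, where the denominator vanishes under neither
map. It is the graph of a function when `α` is injective; being a subring makes that function
compatible with ring operations. -/
def specializationGraph (α : R →+* K) (β : R →+* L) : Subring (K × L) where
  carrier := {x | ∃ p s, α s ≠ 0 ∧ β s ≠ 0 ∧ x = (α p / α s, β p / β s)}
  one_mem' := ⟨1, 1, by simp, by simp, by simp [Prod.one_eq_mk]⟩
  zero_mem' := ⟨0, 1, by simp, by simp, by simp [Prod.zero_eq_mk]⟩
  add_mem' := by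
    rintro _ _ ⟨p, s, hα, hβ, rfl⟩ ⟨p', s', hα', hβ', rfl⟩
    refine ⟨p * s' + s * p', s * s', by simp [hα, hα'], by simp [hβ, hβ'], ?_⟩
    simp [div_add_div, hα, hα', hβ, hβ']
  mul_mem' := by
    rintro _ _ ⟨p, s, hα, hβ, rfl⟩ ⟨p', s', hα', hβ', rfl⟩
    refine ⟨p * p', s * s', by simp [hα, hα'], by simp [hβ, hβ'], ?_⟩
    simp [div_mul_div_comm]
  neg_mem' := by
    rintro _ ⟨p, s, hα, hβ, rfl⟩
    exact ⟨-p, s, hα, hβ, by simp [neg_div]⟩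

namespace specializationGraph

variable {α : R →+* K} {β : R →+* L}

theorem map_mem (r : R) : (α r, β r) ∈ specializationGraph α β :=
  ⟨r, 1, by simp, by simp, by simp⟩

theorem inv_mem {u : K} {v : L} (huv : (u, v) ∈ specializationGraph α β) (hu : u ≠ 0)
    (hv : v ≠ 0) : (u⁻¹, v⁻¹) ∈ specializationGraph α β := by
  obtain ⟨p, s, -, -, hps⟩ := huv
  obtain ⟨rfl, rfl⟩ := Prod.mk.inj hps
  exact ⟨s, p, (div_ne_zero_iff.1 hu).1, (div_ne_zero_iff.1 hv).1, by simp only [inv_div]⟩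

theorem eq_zero_of_zero_mem (hα : Function.Injective α) {v : L}
    (hv : (0, v) ∈ specializationGraph α β) : v = 0 := by
  obtain ⟨p, s, hs, -, hps⟩ := hv
  obtain ⟨hp, rfl⟩ := Prod.mk.inj hps
  have hp0 : p = 0 := by simpa [hs, map_eq_zero_iff α hα] using hp.symm
  simp [hp0]

theorem map_mem_of_forall_map_mem {σ : K →+* K} {τ : L →+* L}
    (h : ∀ r, (σ (α r), τ (β r)) ∈ specializationGraph α β) {u : K} {v : L}
    (huv : (u, v) ∈ specializationGraph α β) : (σ u, τ v) ∈ specializationGraph α β := by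
  obtain ⟨p, s, hα, hβ, hps⟩ := huv
  obtain ⟨rfl, rfl⟩ := Prod.mk.inj hps
  simpa only [div_eq_mul_inv, map_mul, map_inv₀, Prod.mk_mul_mk] using mul_mem (h p)
    (inv_mem (h s) ((map_ne_zero σ).2 hα) ((map_ne_zero τ).2 hβ))

theorem diag_mem_of_mem_closure {α β : R →+* K} {S : Set K}
    (hS : ∀ u ∈ S, (u, u) ∈ specializationGraph α β) {u : K} (hu : u ∈ Subfield.closure S) :
    (u, u) ∈ specializationGraph α β := by
  induction hu using Subfield.closure_induction with
  | mem u hu => exact hS u hu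
  | one => exact one_mem _
  | add u v _ _ hu hv => exact add_mem hu hv
  | neg u _ hu => exact neg_mem hu
  | inv u _ hu =>
    obtain rfl | hu0 := eq_or_ne u 0
    · simpa only [inv_zero] using hu
    · exact inv_mem hu hu0 hu0
  | mul u v _ _ hu hv => exact mul_mem hu hv

end specializationGraph

end SpecializationGraph

theorem derivation_mem_closure_of_forall_mem {R K : Type*} [CommRing R] [Field K] [Algebra R K]
    (D : Derivation R K K) {S : Set K} (hS : ∀ u ∈ S, D u ∈ Subfield.closure S) {u : K}
    (hu : u ∈ Subfield.closure S) : D u ∈ Subfield.closure S := by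
  induction hu using Subfield.closure_induction with
  | mem u hu => exact hS u hu
  | one => simp only [D.map_one_eq_zero, zero_mem]
  | add u v _ _ hu hv => simpa only [map_add] using add_mem hu hv
  | neg u _ hu => simpa only [map_neg] using neg_mem hu
  | inv u hu hDu =>
    simpa only [D.leibniz_inv, smul_eq_mul] using mul_mem (neg_mem (pow_mem (inv_mem hu) 2)) hDu
  | mul u v hu hv hDu hDv =>
    simpa only [D.leibniz, smul_eq_mul] using add_mem (mul_mem hu hDv) (mul_mem hv hDu)

section RatFuncOver

open scoped Polynomial

variable {k : Type*} [Field k]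

/-- The field `C(X)` of rational functions with coefficients in the subfield `C`, realized inside
`k(X)` as the subfield generated by the polynomials with coefficients in `C`. -/
noncomputable def ratFuncOver (C : Subfield k) : Subfield (RatFunc k) :=
  Subfield.closure
    {u | ∃ p : k[X], (∀ i, p.coeff i ∈ C) ∧ u = algebraMap k[X] (RatFunc k) p}

variable {C : Subfield k}

theorem algebraMap_mem_ratFuncOver {p : k[X]} (hp : ∀ i, p.coeff i ∈ C) :
    algebraMap k[X] (RatFunc k) p ∈ ratFuncOver C :=
  Subfield.subset_closure ⟨p, hp, rfl⟩

theorem X_mem_ratFuncOver : RatFunc.X ∈ ratFuncOver C := by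
  rw [← RatFunc.algebraMap_X]
  refine algebraMap_mem_ratFuncOver fun i => ?_
  rw [Polynomial.coeff_X]
  split_ifs
  exacts [one_mem C, zero_mem C]

theorem algebraMap_const_mem_ratFuncOver {c : k} (hc : c ∈ C) :
    algebraMap k (RatFunc k) c ∈ ratFuncOver C := by
  rw [RatFunc.algebraMap_eq_C, ← RatFunc.algebraMap_C]
  refine algebraMap_mem_ratFuncOver fun i => ?_
  rw [Polynomial.coeff_C]
  split_ifs
  exacts [hc, zero_mem C]

theorem mapsTo_derivation_ratFuncOver (D : Derivation k (RatFunc k) (RatFunc k))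
    (hD : D RatFunc.X ∈ ratFuncOver C) : Set.MapsTo D (ratFuncOver C) (ratFuncOver C) := by
  refine fun u => derivation_mem_closure_of_forall_mem D ?_
  rintro _ ⟨p, hp, rfl⟩
  have hp' : algebraMap k[X] (RatFunc k) p.derivative ∈ ratFuncOver C :=
    algebraMap_mem_ratFuncOver fun i => by
      rw [Polynomial.coeff_derivative]
      exact mul_mem (hp _) (add_mem (natCast_mem C i) (one_mem C))
  rw [← RatFunc.aeval_X_left_eq_algebraMap, D.map_aeval, RatFunc.aeval_X_left_eq_algebraMap]
  exact mul_mem hp' hD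

end RatFuncOver

section CoefficientSpecialization

open scoped Polynomial

variable {k : Type*} [Field k] {C : Subfield k} {A : Type*} [CommRing A] [Algebra C A]

/-- The specialization graph on `k(X)` obtained by applying two `C`-algebra maps `a b : A → k` to
the coefficients of polynomials over `A`. Its elements are the pairs `(u, v)` such that `v` arises
from `u` by replacing each coefficient `a x` by `b x`. -/
noncomputable def coeffSpecializationGraph (a b : A →ₐ[C] k) : Subring (RatFunc k × RatFunc k) :=
  specializationGraph
    ((algebraMap k[X] (RatFunc k)).comp (Polynomial.mapRingHom (a : A →+* k)))
    ((algebraMap k[X] (RatFunc k)).comp (Polynomial.mapRingHom (b : A →+* k)))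

namespace coeffSpecializationGraph

variable {a b : A →ₐ[C] k}

theorem algebraMap_map_mem (p : A[X]) :
    (algebraMap k[X] (RatFunc k) (p.map (a : A →+* k)),
      algebraMap k[X] (RatFunc k) (p.map (b : A →+* k))) ∈ coeffSpecializationGraph a b :=
  specializationGraph.map_mem p

theorem algebraMap_const_mem (x : A) :
    (algebraMap k (RatFunc k) (a x), algebraMap k (RatFunc k) (b x)) ∈
      coeffSpecializationGraph a b := by
  simpa [RatFunc.algebraMap_eq_C] using algebraMap_map_mem (a := a) (b := b) (Polynomial.C x)

theorem diag_mem {u : RatFunc k} (hu : u ∈ ratFuncOver C) :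
    (u, u) ∈ coeffSpecializationGraph a b := by
  refine specializationGraph.diag_mem_of_mem_closure ?_ hu
  rintro _ ⟨p, hp, rfl⟩
  obtain ⟨p, rfl⟩ : p ∈ Polynomial.lifts (algebraMap C k) :=
    (Polynomial.lifts_iff_coeff_lifts p).2 fun i => ⟨⟨_, hp i⟩, rfl⟩
  have map_map_algHom (c : A →ₐ[C] k) :
      (p.map (algebraMap C A)).map (c : A →+* k) = p.map (algebraMap C k) := by
    rw [Polynomial.map_map, c.comp_algebraMap]
  have hmem := algebraMap_map_mem (a := a) (b := b) (p.map (algebraMap C A))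
  rwa [map_map_algHom, map_map_algHom] at hmem

theorem algHom_apply_mem {τ : RatFunc k →ₐ[k] RatFunc k} (hτ : τ RatFunc.X ∈ ratFuncOver C)
    {u v : RatFunc k} (huv : (u, v) ∈ coeffSpecializationGraph a b) :
    (τ u, τ v) ∈ coeffSpecializationGraph a b := by
  refine specializationGraph.map_mem_of_forall_map_mem (σ := τ) (τ := τ) (fun p => ?_) huv
  change (τ (algebraMap k[X] (RatFunc k) (p.map (a : A →+* k))),
    τ (algebraMap k[X] (RatFunc k) (p.map (b : A →+* k)))) ∈ coeffSpecializationGraph a b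
  induction p using Polynomial.induction_on' with
  | add p p' hp hp' => simpa only [Polynomial.map_add, map_add, Prod.mk_add_mk] using add_mem hp hp'
  | monomial i x =>
    simpa [← Polynomial.C_mul_X_pow_eq_monomial, ← RatFunc.algebraMap_eq_C] using
      mul_mem (algebraMap_const_mem x) (pow_mem (diag_mem hτ) i)

theorem exists_mem_of_coeffs_subset_range (ha : Function.Injective a) {u : RatFunc k}
    (hnum : (u.num.coeffs : Set k) ⊆ Set.range a)
    (hdenom : (u.denom.coeffs : Set k) ⊆ Set.range a) :
    ∃ v, (u, v) ∈ coeffSpecializationGraph a b := by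
  obtain ⟨p, hp⟩ : u.num ∈ Polynomial.lifts (a : A →+* k) :=
    (Polynomial.lifts_iff_coeffs_subset_range _).2 hnum
  obtain ⟨s, hs⟩ : u.denom ∈ Polynomial.lifts (a : A →+* k) :=
    (Polynomial.lifts_iff_coeffs_subset_range _).2 hdenom
  rw [Polynomial.coe_mapRingHom] at hp hs
  have hs_monic : s.Monic := (Function.Injective.monic_map_iff ha).2 (hs ▸ u.monic_denom)
  have algebraMap_map_ne_zero (c : A →ₐ[C] k) :
      algebraMap k[X] (RatFunc k) (s.map (c : A →+* k)) ≠ 0 :=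
    RatFunc.algebraMap_ne_zero (hs_monic.map _).ne_zero
  refine ⟨_, p, s, algebraMap_map_ne_zero a, algebraMap_map_ne_zero b, Prod.ext ?_ rfl⟩
  simp [hp, hs, u.num_div_denom]

theorem snd_mem_ratFuncOver (hb : ∀ x, b x ∈ C) {u v : RatFunc k}
    (huv : (u, v) ∈ coeffSpecializationGraph a b) : v ∈ ratFuncOver C := by
  obtain ⟨p, s, -, -, hps⟩ := huv
  have algebraMap_map_mem (r : A[X]) :
      algebraMap k[X] (RatFunc k) (r.map (b : A →+* k)) ∈ ratFuncOver C :=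
    algebraMap_mem_ratFuncOver fun i => by simpa using hb (r.coeff i)
  rw [(Prod.mk.inj hps).2]
  exact div_mem (algebraMap_map_mem p) (algebraMap_map_mem s)

theorem eq_of_mem_of_mem (ha : Function.Injective a) {u v w : RatFunc k}
    (hv : (u, v) ∈ coeffSpecializationGraph a b) (hw : (u, w) ∈ coeffSpecializationGraph a b) :
    v = w := by
  have hsub : (0, v - w) ∈ coeffSpecializationGraph a b := by
    simpa only [Prod.mk_sub_mk, sub_self] using sub_mem hv hw
  have hinj : Function.Injective
      ((algebraMap k[X] (RatFunc k)).comp (Polynomial.mapRingHom (a : A →+* k))) :=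
    (RatFunc.algebraMap_injective k).comp (Polynomial.map_injective (a : A →+* k) ha)
  exact sub_eq_zero.1 (specializationGraph.eq_zero_of_zero_mem hinj hsub)

theorem sum_smul_mem {ι : Type*} [Fintype ι] {F : ι → RatFunc k} (hF : ∀ i, F i ∈ ratFuncOver C)
    (x : ι → A) :
    (∑ i, a (x i) • F i, ∑ i, b (x i) • F i) ∈ coeffSpecializationGraph a b := by
  have hterm (i : ι) : (a (x i) • F i, b (x i) • F i) ∈ coeffSpecializationGraph a b := by
    simpa only [Algebra.smul_def, Prod.mk_mul_mk] using
      mul_mem (algebraMap_const_mem (x i)) (diag_mem (hF i))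
  simpa only [prod_mk_sum] using sum_mem fun i (_ : i ∈ Finset.univ) => hterm i

end coeffSpecializationGraph

end CoefficientSpecialization

theorem nonempty_algHom_of_finiteType_of_isAlgClosed (F K A : Type*) [Field F] [Field K]
    [Algebra F K] [IsAlgClosed K] [CommRing A] [Nontrivial A] [Algebra F A]
    [Algebra.FiniteType F A] : Nonempty (A →ₐ[F] K) := by
  obtain ⟨m, hm⟩ := Ideal.exists_maximal A
  let _ : Field (A ⧸ m) := Ideal.Quotient.field m
  have : Module.Finite F (A ⧸ m) := finite_of_finite_type_of_isJacobsonRing F (A ⧸ m)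
  exact ⟨(IsAlgClosed.lift : A ⧸ m →ₐ[F] K).comp (Ideal.Quotient.mkₐ F m)⟩

theorem descent_of_constants_q_difference_general {k : Type*} [Field k] {C : Subfield k}
    [IsAlgClosed C] {τ : RatFunc k →ₐ[k] RatFunc k} (hτ : τ RatFunc.X ∈ ratFuncOver C)
    {ι : Type*} [Fintype ι] {F : ι → RatFunc k} (hF : ∀ i, F i ∈ ratFuncOver C)
    {lam : ι → k} (hlam : ∃ i, lam i ≠ 0) {g : RatFunc k} (h : ∑ i, lam i • F i = τ g - g) :
    ∃ mu : ι → k, (∀ i, mu i ∈ C) ∧ (∃ i, mu i ≠ 0) ∧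
      ∃ h' ∈ ratFuncOver C, ∑ i, mu i • F i = τ h' - h' := by
  obtain ⟨j, hj⟩ := hlam
  let S : Set k := g.num.coeffs ∪ g.denom.coeffs ∪ Set.range lam ∪ {(lam j)⁻¹}
  have hS : S.Finite := by
    simp only [S, Set.finite_union, Finset.finite_toSet, Set.finite_range, Set.finite_singleton,
      and_self]
  let A := Algebra.adjoin C S
  have hSA {x : k} (hx : x ∈ S) : x ∈ A := Algebra.subset_adjoin hx
  have : Algebra.FiniteType C A := A.fg_iff_finiteType.1 (Subalgebra.fg_def.2 ⟨S, hS, rfl⟩)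
  obtain ⟨φ⟩ := nonempty_algHom_of_finiteType_of_isAlgClosed C C A
  let b : A →ₐ[C] k := (Algebra.ofId C k).comp φ
  have hb (x : A) : b x ∈ C := (φ x).2
  let L (i : ι) : A := ⟨lam i, hSA (by simp [S])⟩
  have hLj : IsUnit (L j) :=
    .of_mul_eq_one ⟨(lam j)⁻¹, hSA (by simp [S])⟩ (Subtype.ext (mul_inv_cancel₀ hj))
  obtain ⟨v, hgv⟩ : ∃ v, (g, v) ∈ coeffSpecializationGraph A.val b :=
    coeffSpecializationGraph.exists_mem_of_coeffs_subset_range Subtype.val_injective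
      (fun x hx => ⟨⟨x, hSA (by simp_all [S])⟩, rfl⟩)
      (fun x hx => ⟨⟨x, hSA (by simp_all [S])⟩, rfl⟩)
  have hsum : (τ g - g, ∑ i, b (L i) • F i) ∈ coeffSpecializationGraph A.val b :=
    h ▸ coeffSpecializationGraph.sum_smul_mem hF L
  exact ⟨fun i => b (L i), fun i => hb _, ⟨j, (hLj.map b).ne_zero⟩, v,
    coeffSpecializationGraph.snd_mem_ratFuncOver hb hgv,
    coeffSpecializationGraph.eq_of_mem_of_mem Subtype.val_injective hsum
      (sub_mem (coeffSpecializationGraph.algHom_apply_mem hτ hgv) hgv)⟩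

/-- Descent of constants for `q`-difference equations: if some nonzero `k`-linear combination
of `f, ∂f, …, ∂ⁿf` (with `f ∈ C(X)` and `∂ = X·d/dX`) is of the form `g(qX) - g(X)` for some
`g ∈ k(X)`, then this already happens with coefficients in `C` and `h ∈ C(X)`, where
`C ⊆ k` is algebraically closed and `q ∈ C` is nonzero and not a root of unity. -/
theorem descent_of_constants_q_difference
    (k : Type*) [Field k] [CharZero k]
    (C : Subfield k) [IsAlgClosed C]
    (q : k) (hqC : q ∈ C) (hq0 : q ≠ 0) (hqroot : ∀ n : ℕ, 1 ≤ n → q ^ n ≠ 1)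
    (D : Derivation k (RatFunc k) (RatFunc k)) (hD : D RatFunc.X = RatFunc.X)
    (τ : RatFunc k →ₐ[k] RatFunc k)
    (hτ : τ RatFunc.X = algebraMap k (RatFunc k) q * RatFunc.X)
    (CX : Subfield (RatFunc k))
    (hCX : CX = Subfield.closure
      { u : RatFunc k | ∃ p : Polynomial k, (∀ i, p.coeff i ∈ C) ∧
          u = algebraMap (Polynomial k) (RatFunc k) p })
    (f : RatFunc k) (hf : f ∈ CX)
    (n : ℕ) (lam : Fin (n + 1) → k) (hlam : ∃ i, lam i ≠ 0) (g : RatFunc k)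
    (h : ∑ i : Fin (n + 1), lam i • (⇑D)^[(i : ℕ)] f = τ g - g) :
    ∃ mu : Fin (n + 1) → k, (∀ i, mu i ∈ C) ∧ (∃ i, mu i ≠ 0) ∧
      ∃ h' ∈ CX, ∑ i : Fin (n + 1), mu i • (⇑D)^[(i : ℕ)] f = τ h' - h' := by
  subst hCX
  exact descent_of_constants_q_difference_general
    (hτ ▸ mul_mem (algebraMap_const_mem_ratFuncOver hqC) X_mem_ratFuncOver)
    (fun i => (mapsTo_derivation_ratFuncOver D (hD.symm ▸ X_mem_ratFuncOver)).iterate i hf) hlam h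
end
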